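/- arXiv:math/0401034 — 4 statements merged into one kernel-verified Lean document; each statement's English description precedes it below -/
import Mathlib

section
/- Let R be a commutative ring, L a Lie algebra over R, and m : L → L → L an R-bilinear product that is commutative and associative. For X, Z, W ∈ L set P_X(Z,W) := ⁅X, m Z W⁆ − m ⁅X,Z⁆ W − m Z ⁅X,W⁆. Then for all X, Y, Z, W ∈ L the nine-term Gerstenhaber-infinity expression satisfies the identity G(X,Y,Z,W) = P_{m X Y}(Z,W) − m X (P_Y(Z,W)) − m Y (P_X(Z,W)). -/
/-- The Leibniz defect `P_X(Z,W) = ⁅X, m Z W⁆ − m ⁅X,Z⁆ W − m Z ⁅X,W⁆`. -/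
def leibnizDefect {R : Type*} {L : Type*} [CommRing R] [LieRing L] [LieAlgebra R L]
    (m : L →ₗ[R] L →ₗ[R] L) (X Z W : L) : L :=
  ⁅X, m Z W⁆ - m ⁅X, Z⁆ W - m Z ⁅X, W⁆

/-- The nine-term Gerstenhaber-infinity expression `[μ₂,μ₂]_{G∞}(X,Y,Z,W)`. -/
def gerstExpr {R : Type*} {L : Type*} [CommRing R] [LieRing L] [LieAlgebra R L]
    (m : L →ₗ[R] L →ₗ[R] L) (X Y Z W : L) : L :=
  ⁅m X Y, m Z W⁆ - m ⁅m X Y, Z⁆ W - m Z ⁅m X Y, W⁆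
    - m X ⁅Y, m Z W⁆ - m ⁅X, m Z W⁆ Y
    + m X (m Z ⁅Y, W⁆) + m X (m ⁅Y, Z⁆ W)
    + m ⁅X, Z⁆ (m Y W) + m ⁅X, W⁆ (m Y Z)

section DerivationDefect

variable {R A : Type*} [CommSemiring R] [AddCommGroup A] [Module R A]

/-- The failure of a self-map `D` to satisfy the Leibniz rule for the product `m`. The map
`leibnizDefect m X` is the case `D = ⁅X, ·⁆`; taking `D` to be a bare function lets the defect be
formed for any bracket operation. -/
def derivationDefect (m : A →ₗ[R] A →ₗ[R] A) (D : A → A) (Z W : A) : A :=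
  D (m Z W) - m (D Z) W - m Z (D W)

variable {m : A →ₗ[R] A →ₗ[R] A}

theorem mul_derivationDefect (hcomm : ∀ X Y : A, m X Y = m Y X)
    (hassoc : ∀ X Y Z : A, m (m X Y) Z = m X (m Y Z)) (D : A → A) (Y Z W : A) :
    m Y (derivationDefect m D Z W) =
      m (D (m Z W)) Y - m (D Z) (m Y W) - m (D W) (m Y Z) := by
  have left_comm : m Y (m (D Z) W) = m (D Z) (m Y W) := by
    rw [← hassoc, hcomm Y, hassoc]
  have rotate : m Y (m Z (D W)) = m (D W) (m Y Z) := by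
    rw [← hassoc, hcomm]
  rw [derivationDefect, map_sub, map_sub, hcomm Y (D (m Z W)), left_comm, rotate]

theorem gerstExpr_eq_leibnizDefect_combination_general [Bracket A A]
    (hcomm : ∀ X Y : A, m X Y = m Y X)
    (hassoc : ∀ X Y Z : A, m (m X Y) Z = m X (m Y Z)) (X Y Z W : A) :
    ⁅m X Y, m Z W⁆ - m ⁅m X Y, Z⁆ W - m Z ⁅m X Y, W⁆
        - m X ⁅Y, m Z W⁆ - m ⁅X, m Z W⁆ Y
        + m X (m Z ⁅Y, W⁆) + m X (m ⁅Y, Z⁆ W)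
        + m ⁅X, Z⁆ (m Y W) + m ⁅X, W⁆ (m Y Z) =
      derivationDefect m (⁅m X Y, ·⁆) Z W
        - m X (derivationDefect m (⁅Y, ·⁆) Z W)
        - m Y (derivationDefect m (⁅X, ·⁆) Z W) := by
  rw [mul_derivationDefect hcomm hassoc (⁅X, ·⁆) Y]
  simp only [derivationDefect, map_sub]
  abel

end DerivationDefect

/-- For a commutative associative bilinear product `m` on a Lie algebra `L`,
the nine-term Gerstenhaber-infinity expression equals
`P_{m X Y}(Z,W) − m X (P_Y(Z,W)) − m Y (P_X(Z,W))`. -/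
theorem gerstExpr_eq_leibnizDefect_combination
    (R : Type*) (L : Type*) [CommRing R] [LieRing L] [LieAlgebra R L]
    (m : L →ₗ[R] L →ₗ[R] L)
    (hcomm : ∀ X Y : L, m X Y = m Y X)
    (hassoc : ∀ X Y Z : L, m (m X Y) Z = m X (m Y Z)) :
    ∀ X Y Z W : L,
      gerstExpr m X Y Z W =
        leibnizDefect m (m X Y) Z W
          - m X (leibnizDefect m Y Z W)
          - m Y (leibnizDefect m X Z W) := by
  exact gerstExpr_eq_leibnizDefect_combination_general hcomm hassoc
end

section
/- Let R be a commutative ring, L a Lie algebra over R, and m : L → L → L an R-bilinear product that is commutative and associative. Then the nine-term Gerstenhaber-infinity expression G(X,Y,Z,W) vanishes for all X, Y, Z, W ∈ L if and only if the Hertling–Manin F-manifold axiom holds: P_{m X Y}(Z,W) = m X (P_Y(Z,W)) + m Y (P_X(Z,W)) for all X, Y, Z, W ∈ L. This is the paper's assertion that the structure defined by the equation [μ₂,μ₂]_{G∞} = 0 is precisely the F-manifold structure of Hertling and Manin. -/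
section

variable {R L : Type*} [CommRing R] [LieRing L] [LieAlgebra R L] {m : L →ₗ[R] L →ₗ[R] L}

theorem apply_leibnizDefect_eq (hcomm : ∀ X Y : L, m X Y = m Y X)
    (hassoc : ∀ X Y Z : L, m (m X Y) Z = m X (m Y Z)) (X Y Z W : L) :
    m Y (leibnizDefect m X Z W) = m ⁅X, m Z W⁆ Y - m ⁅X, Z⁆ (m Y W) - m ⁅X, W⁆ (m Y Z) := by
  have bracket_left : m Y (m ⁅X, Z⁆ W) = m ⁅X, Z⁆ (m Y W) := by
    rw [← hassoc, hcomm Y, hassoc]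
  have bracket_right : m Y (m Z ⁅X, W⁆) = m ⁅X, W⁆ (m Y Z) := by
    rw [← hassoc, hcomm]
  rw [leibnizDefect, map_sub, map_sub, hcomm Y ⁅X, m Z W⁆, bracket_left, bracket_right]

theorem gerstExpr_eq_leibnizDefect_sub (hcomm : ∀ X Y : L, m X Y = m Y X)
    (hassoc : ∀ X Y Z : L, m (m X Y) Z = m X (m Y Z)) (X Y Z W : L) :
    gerstExpr m X Y Z W = leibnizDefect m (m X Y) Z W -
      (m X (leibnizDefect m Y Z W) + m Y (leibnizDefect m X Z W)) := by
  rw [apply_leibnizDefect_eq hcomm hassoc X Y]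
  simp only [gerstExpr, leibnizDefect, map_sub]
  abel

end

/-- For a commutative associative bilinear product `m` on a Lie algebra `L`,
the Gerstenhaber-infinity expression vanishes identically if and only if the
Hertling–Manin F-manifold axiom
`P_{m X Y}(Z,W) = m X (P_Y(Z,W)) + m Y (P_X(Z,W))` holds. -/
theorem gerstExpr_vanishes_iff_FManifold
    (R : Type*) (L : Type*) [CommRing R] [LieRing L] [LieAlgebra R L]
    (m : L →ₗ[R] L →ₗ[R] L)
    (hcomm : ∀ X Y : L, m X Y = m Y X)
    (hassoc : ∀ X Y Z : L, m (m X Y) Z = m X (m Y Z)) :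
    (∀ X Y Z W : L, gerstExpr m X Y Z W = 0) ↔
    (∀ X Y Z W : L,
      leibnizDefect m (m X Y) Z W =
        m X (leibnizDefect m Y Z W) + m Y (leibnizDefect m X Z W)) := by
  simp only [gerstExpr_eq_leibnizDefect_sub hcomm hassoc, sub_eq_zero]
end

section
/- Let k be a commutative ring, n a natural number, and π : Fin n → Fin n → MvPolynomial (Fin n) k an antisymmetric matrix of polynomials (π j i = −π i j for all i, j). Define the bracket {f,g} := Σ_{i,j} π i j * (pderiv i f) * (pderiv j g) on MvPolynomial (Fin n) k. Then for all polynomials f, g, h one has the Jacobiator formula: {f,{g,h}} + {g,{h,f}} + {h,{f,g}} = Σ_{a,b,c} J(a,b,c) * (pderiv a f) * (pderiv b g) * (pderiv c h), where J(a,b,c) := Σ_j ( π a j * pderiv j (π b c) + π b j * pderiv j (π c a) + π c j * pderiv j (π a b) ). -/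
open MvPolynomial

/-- The bracket `{f,g} = Σ_{i,j} π i j * ∂_i f * ∂_j g` associated with a bivector `π`. -/
noncomputable def bivectorBracket {k : Type*} [CommRing k] {n : ℕ}
    (π : Fin n → Fin n → MvPolynomial (Fin n) k)
    (f g : MvPolynomial (Fin n) k) : MvPolynomial (Fin n) k :=
  ∑ i : Fin n, ∑ j : Fin n, π i j * pderiv i f * pderiv j g

/-- The Schouten trivector `J(a,b,c) = Σ_j (π a j ∂_j π b c + π b j ∂_j π c a + π c j ∂_j π a b)`. -/
noncomputable def schoutenTrivector {k : Type*} [CommRing k] {n : ℕ}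
    (π : Fin n → Fin n → MvPolynomial (Fin n) k)
    (a b c : Fin n) : MvPolynomial (Fin n) k :=
  ∑ j : Fin n,
    (π a j * pderiv j (π b c) + π b j * pderiv j (π c a) + π c j * pderiv j (π a b))

/-!
Only the fact that the partial derivatives are commuting derivations `D i` matters. Put
`X a = Σ_j π a j • D j`; antisymmetry gives `{f, φ} = Σ_a D a f * X a φ = -Σ_a X a f * D a φ`.
As `{f, ·}` is a derivation, `{f, {g, h}}` splits into a term in which the coefficients `π b c` are
differentiated and the second-order terms `H h (f, g) - H g (f, h)`, where
`H φ (u, v) = Σ_{i,j} X i u * X j v * D i (D j φ)`. Since the `D i` commute, `H φ` is symmetric, and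
the second-order terms cancel in the cyclic sum.
-/

theorem pderiv_pderiv_comm {σ R : Type*} [CommSemiring R] (i j : σ) (p : MvPolynomial σ R) :
    pderiv i (pderiv j p) = pderiv j (pderiv i p) := by
  classical
  ext m
  rcases eq_or_ne i j with rfl | hij
  · rfl
  · simp only [coeff_pderiv, Finsupp.add_apply, Finsupp.single_eq_of_ne hij,
      Finsupp.single_eq_of_ne hij.symm, add_zero, add_right_comm m]
    ring

section CommutingDerivations

variable {R A ι : Type*} [CommSemiring R] [CommRing A] [Algebra R A] [Fintype ι]
  (D : ι → Derivation R A A) (π : ι → ι → A)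

/-- The bracket of the bivector `Σ_{i,j} π i j • D i ⊗ D j` built from a finite family of
derivations `D`; for `D = pderiv` it unfolds to `bivectorBracket`. -/
def derivationBracket (f g : A) : A :=
  ∑ i, ∑ j, π i j * D i f * D j g

/-- The coefficients of the Schouten square of `Σ_{i,j} π i j • D i ⊗ D j` for commuting `D i`,
up to normalization; for `D = pderiv` they unfold to `schoutenTrivector`. -/
def derivationTrivector (a b c : ι) : A :=
  ∑ j, (π a j * D j (π b c) + π b j * D j (π c a) + π c j * D j (π a b))

/-- The `a`-th row of the bivector as a vector field; for `D = pderiv` this is the Hamiltonian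
vector field of the `a`-th coordinate. -/
def coordinateField (a : ι) : Derivation R A A :=
  ∑ j, π a j • D j

/-- The Hamiltonian vector field of `f`, i.e. the bracket with `f` as a derivation of its second
argument. -/
def hamiltonianField (f : A) : Derivation R A A :=
  ∑ a, D a f • coordinateField D π a

/-- The part of `{f, {g, h}}` in which the outer bracket differentiates the coefficients of the
inner one. -/
def coefficientTerm (f g h : A) : A :=
  ∑ a, ∑ b, ∑ c, coordinateField D π a (π b c) * D a f * D b g * D c h

/-- The Hessian of `φ` evaluated on the Hamiltonian vector fields of `u` and `v`, for antisymmetric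
`π`: the signs in `{u, ·} = -Σ_i coordinateField D π i u • D i` and its analogue for `v` cancel. -/
def hamiltonianHessian (φ u v : A) : A :=
  ∑ i, ∑ j, coordinateField D π i u * coordinateField D π j v * D i (D j φ)

theorem sum_smul_derivation_apply (w : ι → A) (V : ι → Derivation R A A) (φ : A) :
    (∑ i, w i • V i) φ = ∑ i, w i * V i φ := by
  change Derivation.coeFnAddMonoidHom (∑ i, w i • V i) φ = _
  simp

theorem coordinateField_apply (a : ι) (φ : A) :
    coordinateField D π a φ = ∑ j, π a j * D j φ :=
  sum_smul_derivation_apply (π a) D φ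

theorem hamiltonianField_apply (f φ : A) :
    hamiltonianField D π f φ = ∑ a, D a f * coordinateField D π a φ :=
  sum_smul_derivation_apply (fun a => D a f) (coordinateField D π) φ

theorem derivationBracket_eq_hamiltonianField (f g : A) :
    derivationBracket D π f g = hamiltonianField D π f g := by
  simp only [derivationBracket, hamiltonianField_apply, coordinateField_apply, Finset.mul_sum]
  exact Finset.sum_congr rfl fun i _ => Finset.sum_congr rfl fun j _ => by ring

theorem derivationTrivector_eq_add_coordinateField (a b c : ι) :
    derivationTrivector D π a b c = coordinateField D π a (π b c)
      + coordinateField D π b (π c a) + coordinateField D π c (π a b) := by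
  simp only [derivationTrivector, coordinateField_apply, Finset.sum_add_distrib]

theorem coefficientTerm_eq_sum_hamiltonianField (f g h : A) :
    coefficientTerm D π f g h = ∑ b, ∑ c, hamiltonianField D π f (π b c) * D b g * D c h := by
  simp only [coefficientTerm, hamiltonianField_apply, Finset.sum_mul]
  rw [← Finset.sum_comm_cycle]
  exact Finset.sum_congr rfl fun b _ => Finset.sum_congr rfl fun c _ =>
    Finset.sum_congr rfl fun a _ => by ring

theorem coefficientTerm_cyclic_sum (f g h : A) :
    coefficientTerm D π f g h + coefficientTerm D π g h f + coefficientTerm D π h f g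
      = ∑ a, ∑ b, ∑ c, derivationTrivector D π a b c * D a f * D b g * D c h := by
  have rotate_ghf : coefficientTerm D π g h f = ∑ a, ∑ b, ∑ c,
      coordinateField D π b (π c a) * D b g * D c h * D a f :=
    Finset.sum_comm_cycle
  have rotate_hfg : coefficientTerm D π h f g = ∑ a, ∑ b, ∑ c,
      coordinateField D π c (π a b) * D c h * D a f * D b g :=
    Finset.sum_comm_cycle.symm
  rw [rotate_ghf, rotate_hfg]
  simp only [coefficientTerm, derivationTrivector_eq_add_coordinateField,
    ← Finset.sum_add_distrib]
  exact Finset.sum_congr rfl fun a _ => Finset.sum_congr rfl fun b _ =>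
    Finset.sum_congr rfl fun c _ => by ring

variable {D}

theorem hamiltonianHessian_comm (hcomm : ∀ i j a, D i (D j a) = D j (D i a)) (φ u v : A) :
    hamiltonianHessian D π φ u v = hamiltonianHessian D π φ v u := by
  unfold hamiltonianHessian
  rw [Finset.sum_comm]
  refine Finset.sum_congr rfl fun j _ => Finset.sum_congr rfl fun i _ => ?_
  rw [hcomm i j, mul_comm (coordinateField D π i u)]

variable {π}

theorem sum_mul_eq_neg_coordinateField (hanti : ∀ i j, π j i = -π i j) (c : ι) (g : A) :
    ∑ b, π b c * D b g = -coordinateField D π c g := by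
  simp only [coordinateField_apply, hanti c, neg_mul, Finset.sum_neg_distrib]

theorem hamiltonianField_apply_eq_neg_sum (hanti : ∀ i j, π j i = -π i j) (f φ : A) :
    hamiltonianField D π f φ = -∑ j, coordinateField D π j f * D j φ := by
  simp only [← Finset.sum_neg_distrib, ← neg_mul, ← sum_mul_eq_neg_coordinateField hanti]
  simp only [hamiltonianField_apply, coordinateField_apply, Finset.mul_sum, Finset.sum_mul]
  rw [Finset.sum_comm]
  exact Finset.sum_congr rfl fun j _ => Finset.sum_congr rfl fun a _ => by ring

theorem sum_coordinateField_mul_hamiltonianField (hanti : ∀ i j, π j i = -π i j) (φ u v : A) :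
    ∑ j, coordinateField D π j v * hamiltonianField D π u (D j φ)
      = -hamiltonianHessian D π φ u v := by
  simp only [hamiltonianHessian, hamiltonianField_apply_eq_neg_sum hanti, mul_neg,
    Finset.sum_neg_distrib, Finset.mul_sum]
  rw [Finset.sum_comm]
  congr! 3
  ring

theorem derivationBracket_derivationBracket (hanti : ∀ i j, π j i = -π i j) (f g h : A) :
    derivationBracket D π f (derivationBracket D π g h)
      = coefficientTerm D π f g h + hamiltonianHessian D π h f g
        - hamiltonianHessian D π g f h := by
  have leibniz : hamiltonianField D π f (derivationBracket D π g h)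
      = ∑ b, ∑ c, hamiltonianField D π f (π b c) * D b g * D c h
        + ∑ c, (∑ b, π b c * D b g) * hamiltonianField D π f (D c h)
        + ∑ b, (∑ c, π b c * D c h) * hamiltonianField D π f (D b g) := by
    simp only [Finset.sum_mul]
    rw [Finset.sum_comm (f := fun c b => π b c * D b g * _)]
    simp only [derivationBracket, map_sum, Derivation.leibniz, smul_eq_mul,
      ← Finset.sum_add_distrib]
    exact Finset.sum_congr rfl fun b _ => Finset.sum_congr rfl fun c _ => by ring
  rw [derivationBracket_eq_hamiltonianField, leibniz, ← coefficientTerm_eq_sum_hamiltonianField]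
  simp only [sum_mul_eq_neg_coordinateField hanti, ← coordinateField_apply, neg_mul,
    Finset.sum_neg_distrib, sum_coordinateField_mul_hamiltonianField hanti]
  ring

theorem jacobiator_formula_general (hcomm : ∀ i j a, D i (D j a) = D j (D i a))
    (hanti : ∀ i j, π j i = -π i j) (f g h : A) :
    derivationBracket D π f (derivationBracket D π g h)
        + derivationBracket D π g (derivationBracket D π h f)
        + derivationBracket D π h (derivationBracket D π f g)
      = ∑ a, ∑ b, ∑ c, derivationTrivector D π a b c * D a f * D b g * D c h := by
  rw [← coefficientTerm_cyclic_sum]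
  simp only [derivationBracket_derivationBracket hanti]
  rw [hamiltonianHessian_comm π hcomm f h g, hamiltonianHessian_comm π hcomm g h f,
    hamiltonianHessian_comm π hcomm h g f]
  ring

end CommutingDerivations

/-- For an antisymmetric bivector `π`, the Jacobiator of the associated
bracket is given by the Schouten trivector contracted with the first derivatives of the
arguments. -/
theorem jacobiator_formula
    (k : Type*) [CommRing k] (n : ℕ)
    (π : Fin n → Fin n → MvPolynomial (Fin n) k)
    (hanti : ∀ i j : Fin n, π j i = - π i j) :
    ∀ f g h : MvPolynomial (Fin n) k,
      bivectorBracket π f (bivectorBracket π g h)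
        + bivectorBracket π g (bivectorBracket π h f)
        + bivectorBracket π h (bivectorBracket π f g)
      = ∑ a : Fin n, ∑ b : Fin n, ∑ c : Fin n,
          schoutenTrivector π a b c * pderiv a f * pderiv b g * pderiv c h :=
  jacobiator_formula_general pderiv_pderiv_comm hanti
end

section
/- Let k be a commutative ring, n a natural number, and π : Fin n → Fin n → MvPolynomial (Fin n) k an antisymmetric matrix of polynomials satisfying the Schouten condition. Let ι : MvPolynomial (Fin n) k → MvPolynomial (Fin (n+1)) k be the ring homomorphism renaming variables along Fin.castSucc, and let ħ := X (Fin.last n) be the last variable. Define π̃ : Fin (n+1) → Fin (n+1) → MvPolynomial (Fin (n+1)) k by π̃ (Fin.castSucc i) (Fin.castSucc j) := ħ * ι (π i j), and π̃ i' j' := 0 whenever i' = Fin.last n or j' = Fin.last n. Then π̃ is antisymmetric, satisfies the Schouten condition on affine (n+1)-space, and every entry π̃ i' j' has zero constant coefficient. -/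
open MvPolynomial

/-!
The row `π a` of a bivector is the derivation `{x_a, ·}`, so the Schouten condition is the vanishing
of `{x_a, π b c} + {x_b, π c a} + {x_c, π a b}`. Extending `π` by zero to further variables
preserves this condition, because no derivative along a new variable enters. A new variable is then
a Casimir of the extension: it is killed by every `{x_a, ·}`. Multiplying a bivector by a Casimir
`h` multiplies the left-hand side of the Schouten condition by `h ^ 2`, and taking for `h` a
variable makes all entries vanish at the origin.
-/

section CommSemiring

variable {σ τ k : Type*} [CommSemiring k]

/-- The coordinate component of the Schouten bracket `[π, π]`, up to a scalar, which for
antisymmetric `π` is the Jacobi expression of `x_a`, `x_b`, `x_c`. The derivation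
`{x_a, ·} = ∑ j, π a j * ∂_j` is encoded by its values `π a` on the variables, which makes sense
for infinitely many variables as well. -/
noncomputable def jacobiator (π : σ → σ → MvPolynomial σ k) (a b c : σ) : MvPolynomial σ k :=
  mkDerivation k (π a) (π b c) + mkDerivation k (π b) (π c a) + mkDerivation k (π c) (π a b)

/-- A Casimir of `π`: a polynomial whose bracket with every variable, hence with every polynomial,
is zero. -/
def IsCasimir (π : σ → σ → MvPolynomial σ k) (h : MvPolynomial σ k) : Prop :=
  ∀ a, mkDerivation k (π a) h = 0

/-- A pointed bivector: one that vanishes at the origin. -/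
def IsPointed (π : σ → σ → MvPolynomial σ k) : Prop :=
  ∀ i j, constantCoeff (π i j) = 0

/-- The bivector in the variables `τ` obtained from one in the variables `σ` by renaming along `f`,
with zero entries outside the range of `f`. It is meant for injective `f`. -/
noncomputable def extendByZero (f : σ → τ) (π : σ → σ → MvPolynomial σ k) :
    τ → τ → MvPolynomial τ k :=
  Function.extend f (fun i => Function.extend f (fun j => rename f (π i j)) 0) 0

theorem mkDerivation_eq_sum_mul_pderiv [Fintype σ] (v : σ → MvPolynomial σ k)
    (p : MvPolynomial σ k) : mkDerivation k v p = ∑ j, v j * pderiv j p := by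
  classical
  have hsum (q : MvPolynomial σ k) : (∑ j, v j • pderiv j) q = ∑ j, v j * pderiv j q := by
    simp only [← Derivation.coeFnAddMonoidHom_apply, map_sum, Finset.sum_apply]
    rfl
  have hD : mkDerivation k v = ∑ j, v j • pderiv j :=
    derivation_ext fun i => by simp [hsum, pderiv_X, Pi.single_apply]
  rw [hD, hsum]

theorem mkDerivation_smul_apply (h : MvPolynomial σ k) (v : σ → MvPolynomial σ k)
    (p : MvPolynomial σ k) : mkDerivation k (h • v) p = h * mkDerivation k v p := by
  have hD : mkDerivation k (h • v) = h • mkDerivation k v := derivation_ext fun i => by simp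
  rw [hD, Derivation.smul_apply, smul_eq_mul]

theorem mkDerivation_rename {f : σ → τ} {v : σ → MvPolynomial σ k} {w : τ → MvPolynomial τ k}
    (hvw : ∀ i, w (f i) = rename f (v i)) (p : MvPolynomial σ k) :
    mkDerivation k w (rename f p) = rename f (mkDerivation k v p) := by
  induction p using MvPolynomial.induction_on with
  | C r => simp
  | add p q hp hq => simp [hp, hq]
  | mul_X p i hp => simp [hp, hvw]

theorem jacobiator_eq_sum [Fintype σ] (π : σ → σ → MvPolynomial σ k) (a b c : σ) :
    jacobiator π a b c =
      ∑ j, (π a j * pderiv j (π b c) + π b j * pderiv j (π c a) + π c j * pderiv j (π a b)) := by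
  simp only [jacobiator, mkDerivation_eq_sum_mul_pderiv, Finset.sum_add_distrib]

theorem jacobiator_rotate (π : σ → σ → MvPolynomial σ k) (a b c : σ) :
    jacobiator π b c a = jacobiator π a b c := by
  simp only [jacobiator]
  ring

theorem jacobiator_eq_zero_of_row_col_eq_zero {π : σ → σ → MvPolynomial σ k} {a : σ}
    (hrow : ∀ j, π a j = 0) (hcol : ∀ i, π i a = 0) (b c : σ) : jacobiator π a b c = 0 := by
  have hD : mkDerivation k (π a) = 0 := derivation_ext fun j => by simp [hrow]
  simp [jacobiator, hD, hrow, hcol]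

theorem IsCasimir.jacobiator_smul {π : σ → σ → MvPolynomial σ k} {h : MvPolynomial σ k}
    (hh : IsCasimir π h) (a b c : σ) : jacobiator (h • π) a b c = h ^ 2 * jacobiator π a b c := by
  have hD (i : σ) (p : MvPolynomial σ k) :
      mkDerivation k ((h • π) i) (h * p) = h ^ 2 * mkDerivation k (π i) p := by
    rw [Pi.smul_apply, mkDerivation_smul_apply, Derivation.leibniz, hh i, smul_zero, add_zero,
      smul_eq_mul, sq, mul_assoc]
  have hentry (i j : σ) : (h • π) i j = h * π i j := rfl
  simp only [jacobiator, hentry, hD, mul_add]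

theorem isPointed_smul {h : MvPolynomial σ k} (hh : constantCoeff h = 0)
    (π : σ → σ → MvPolynomial σ k) : IsPointed (h • π) := fun i j => by
  simp [hh]

section extendByZero

variable {f : σ → τ}

theorem extendByZero_apply (hf : f.Injective) (π : σ → σ → MvPolynomial σ k) (i j : σ) :
    extendByZero f π (f i) (f j) = rename f (π i j) := by
  simp only [extendByZero, hf.extend_apply]

theorem extendByZero_of_left_notMem_range {i : τ} (hi : i ∉ Set.range f)
    (π : σ → σ → MvPolynomial σ k) (j : τ) : extendByZero f π i j = 0 := by
  rw [extendByZero, Function.extend_apply' _ _ _ hi, Pi.zero_apply, Pi.zero_apply]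

theorem extendByZero_of_right_notMem_range (hf : f.Injective) {j : τ} (hj : j ∉ Set.range f)
    (π : σ → σ → MvPolynomial σ k) (i : τ) : extendByZero f π i j = 0 := by
  by_cases hi : i ∈ Set.range f
  · obtain ⟨i, rfl⟩ := hi
    rw [extendByZero, hf.extend_apply, Function.extend_apply' _ _ _ hj, Pi.zero_apply]
  · exact extendByZero_of_left_notMem_range hi π j

theorem jacobiator_extendByZero_apply (hf : f.Injective) (π : σ → σ → MvPolynomial σ k)
    (a b c : σ) :
    jacobiator (extendByZero f π) (f a) (f b) (f c) = rename f (jacobiator π a b c) := by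
  simp only [jacobiator, extendByZero_apply hf, mkDerivation_rename (extendByZero_apply hf π _),
    map_add]

theorem jacobiator_extendByZero_of_notMem_range (hf : f.Injective) {a : τ}
    (ha : a ∉ Set.range f) (π : σ → σ → MvPolynomial σ k) (b c : τ) :
    jacobiator (extendByZero f π) a b c = 0 :=
  jacobiator_eq_zero_of_row_col_eq_zero (extendByZero_of_left_notMem_range ha π)
    (extendByZero_of_right_notMem_range hf ha π) b c

theorem isCasimir_extendByZero_X (hf : f.Injective) {t : τ} (ht : t ∉ Set.range f)
    (π : σ → σ → MvPolynomial σ k) : IsCasimir (extendByZero f π) (X t) := fun a => by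
  rw [mkDerivation_X, extendByZero_of_right_notMem_range hf ht]

end extendByZero

theorem eq_X_last_smul_extendByZero {n : ℕ} {π : Fin n → Fin n → MvPolynomial (Fin n) k}
    {πt : Fin (n + 1) → Fin (n + 1) → MvPolynomial (Fin (n + 1)) k}
    (hcast : ∀ i j : Fin n,
      πt i.castSucc j.castSucc = X (Fin.last n) * rename Fin.castSucc (π i j))
    (hlast : ∀ i j, i = Fin.last n ∨ j = Fin.last n → πt i j = 0) :
    πt = (X (Fin.last n) : MvPolynomial (Fin (n + 1)) k) • extendByZero Fin.castSucc π := by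
  have hinj := Fin.castSucc_injective n
  have hnotMem : Fin.last n ∉ Set.range Fin.castSucc := by simp
  funext i j
  rw [Pi.smul_apply, Pi.smul_apply, smul_eq_mul]
  cases i using Fin.lastCases with
  | last => rw [hlast _ _ (.inl rfl), extendByZero_of_left_notMem_range hnotMem, mul_zero]
  | cast i =>
    cases j using Fin.lastCases with
    | last => rw [hlast _ _ (.inr rfl), extendByZero_of_right_notMem_range hinj hnotMem, mul_zero]
    | cast j => rw [hcast, extendByZero_apply hinj]

end CommSemiring

section CommRing

variable {σ τ k : Type*} [CommRing k]

/-- A Poisson structure on the affine space with coordinates `σ`, given by the matrix `π` of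
brackets of the coordinates; `jacobiator_eq_zero` is the Schouten condition. -/
structure IsPoissonBivector (π : σ → σ → MvPolynomial σ k) : Prop where
  antisymm : ∀ i j, π j i = -π i j
  jacobiator_eq_zero : ∀ a b c, jacobiator π a b c = 0

theorem isPoissonBivector_iff_sum [Fintype σ] {π : σ → σ → MvPolynomial σ k} :
    IsPoissonBivector π ↔ (∀ i j, π j i = -π i j) ∧ ∀ a b c,
      ∑ j, (π a j * pderiv j (π b c) + π b j * pderiv j (π c a)
        + π c j * pderiv j (π a b)) = 0 := by
  simp only [← jacobiator_eq_sum]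
  exact ⟨fun hπ => ⟨hπ.antisymm, hπ.jacobiator_eq_zero⟩, fun ⟨hanti, hjac⟩ => ⟨hanti, hjac⟩⟩

theorem IsPoissonBivector.smul {π : σ → σ → MvPolynomial σ k} (hπ : IsPoissonBivector π)
    {h : MvPolynomial σ k} (hh : IsCasimir π h) : IsPoissonBivector (h • π) where
  antisymm i j := by simp only [Pi.smul_apply, hπ.antisymm i j, smul_neg]
  jacobiator_eq_zero a b c := by rw [hh.jacobiator_smul, hπ.jacobiator_eq_zero, mul_zero]

theorem extendByZero_antisymm {f : σ → τ} (hf : f.Injective) {π : σ → σ → MvPolynomial σ k}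
    (hπ : ∀ i j, π j i = -π i j) (i j : τ) : extendByZero f π j i = -extendByZero f π i j := by
  by_cases hi : i ∈ Set.range f
  · by_cases hj : j ∈ Set.range f
    · obtain ⟨i, rfl⟩ := hi
      obtain ⟨j, rfl⟩ := hj
      rw [extendByZero_apply hf, extendByZero_apply hf, hπ i j, map_neg]
    · rw [extendByZero_of_left_notMem_range hj, extendByZero_of_right_notMem_range hf hj, neg_zero]
  · rw [extendByZero_of_left_notMem_range hi, extendByZero_of_right_notMem_range hf hi, neg_zero]

theorem IsPoissonBivector.extendByZero {f : σ → τ} (hf : f.Injective)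
    {π : σ → σ → MvPolynomial σ k} (hπ : IsPoissonBivector π) :
    IsPoissonBivector (extendByZero f π) where
  antisymm := extendByZero_antisymm hf hπ.antisymm
  jacobiator_eq_zero a b c := by
    by_cases ha : a ∈ Set.range f
    · by_cases hb : b ∈ Set.range f
      · by_cases hc : c ∈ Set.range f
        · obtain ⟨a, rfl⟩ := ha
          obtain ⟨b, rfl⟩ := hb
          obtain ⟨c, rfl⟩ := hc
          rw [jacobiator_extendByZero_apply hf, hπ.jacobiator_eq_zero, map_zero]
        · rw [← jacobiator_rotate, ← jacobiator_rotate,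
            jacobiator_extendByZero_of_notMem_range hf hc]
      · rw [← jacobiator_rotate, jacobiator_extendByZero_of_notMem_range hf hb]
    · exact jacobiator_extendByZero_of_notMem_range hf ha π b c

theorem pointed_extension_of_poisson_general {f : σ → τ} (hf : f.Injective) {t : τ}
    (ht : t ∉ Set.range f) {π : σ → σ → MvPolynomial σ k} (hπ : IsPoissonBivector π) :
    IsPoissonBivector ((X t : MvPolynomial τ k) • extendByZero f π) ∧
      IsPointed ((X t : MvPolynomial τ k) • extendByZero f π) :=
  ⟨(hπ.extendByZero hf).smul (isCasimir_extendByZero_X hf ht π),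
    isPointed_smul (constantCoeff_X k t) _⟩

end CommRing

/-- Multiplying a Poisson bivector `π` on affine `n`-space by the extra
coordinate `ħ = x_{n+1}` yields a pointed Poisson bivector `π̃` on affine `(n+1)`-space:
`π̃` is antisymmetric, satisfies the Schouten condition, and all its entries vanish at
the origin. -/
theorem pointed_extension_of_poisson
    (k : Type*) [CommRing k] (n : ℕ)
    (π : Fin n → Fin n → MvPolynomial (Fin n) k)
    (hanti : ∀ i j : Fin n, π j i = - π i j)
    (hschouten : ∀ a b c : Fin n,
      ∑ j : Fin n,
        (π a j * pderiv j (π b c) + π b j * pderiv j (π c a)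
          + π c j * pderiv j (π a b)) = 0)
    (πt : Fin (n + 1) → Fin (n + 1) → MvPolynomial (Fin (n + 1)) k)
    (hπt_cast : ∀ i j : Fin n,
      πt i.castSucc j.castSucc
        = X (Fin.last n) * rename (Fin.castSucc : Fin n → Fin (n + 1)) (π i j))
    (hπt_last : ∀ i' j' : Fin (n + 1),
      i' = Fin.last n ∨ j' = Fin.last n → πt i' j' = 0) :
    (∀ i' j' : Fin (n + 1), πt j' i' = - πt i' j') ∧
    (∀ a b c : Fin (n + 1),
      ∑ j : Fin (n + 1),
        (πt a j * pderiv j (πt b c) + πt b j * pderiv j (πt c a)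
          + πt c j * pderiv j (πt a b)) = 0) ∧
    (∀ i' j' : Fin (n + 1), constantCoeff (πt i' j') = 0) := by
  obtain rfl := eq_X_last_smul_extendByZero hπt_cast hπt_last
  exact and_assoc.1 <| (pointed_extension_of_poisson_general (Fin.castSucc_injective n) (by simp)
    (isPoissonBivector_iff_sum.2 ⟨hanti, hschouten⟩)).imp_left isPoissonBivector_iff_sum.1
end
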